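/- Let λ, γ ∈ (0,1], let G be a (λ,γ)-supersaturated graph on N vertices with average degree D, let t ≥ 1 and 0 < ℓ < t be integers, and set ν = max{ (1 − γ·D/N)^{ℓ}, λ }. Then there exists a function P assigning to each ℓ-element set of vertices a subset of V(G) with |P(L)| ≤ ν·N, such that for every independent set I of G with |I| = t there exists L ⊆ I with |L| = ℓ, I \ L ⊆ P(L), and L ∩ P(L) = ∅. -/

import Mathlib

open MeasureTheory Filter Finset

noncomputable section

/-- The binomial random subset measure on `V → Bool`: each coordinate is `true`
independently with probability `p`. -/
def bernMeasure (V : Type*) [Fintype V] (p : ℝ) : Measure (V → Bool) :=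
  Measure.pi fun _ => (PMF.bernoulli (min (Real.toNNReal p) 1) (min_le_right _ _)).toMeasure

/-- Vertices of the Kneser graph: `k`-element subsets of `[n]`. -/
abbrev KVert (n k : ℕ) := {A : Finset (Fin n) // A.card = k}

/-- The Kneser graph `K(n,k)`. -/
def kneser (n k : ℕ) : SimpleGraph (KVert n k) where
  Adj A B := A ≠ B ∧ Disjoint A.1 B.1
  symm := ⟨fun A B h => ⟨h.1.symm, h.2.symm⟩⟩
  loopless := ⟨fun A h => h.1 rfl⟩

/-- Total number of edges of a graph. -/
def eTotal {V : Type*} [Fintype V] (G : SimpleGraph V) : ℕ := Nat.card G.edgeSet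

/-- Number of edges of `G` with both endpoints in `S`. -/
def eCount {V : Type*} [Fintype V] (G : SimpleGraph V) (S : Finset V) : ℕ :=
  Nat.card (G.induce (S : Set V)).edgeSet

/-- `S` is an independent set of `G`. -/
def IsIndep {V : Type*} (G : SimpleGraph V) (S : Finset V) : Prop :=
  ∀ a ∈ S, ∀ b ∈ S, ¬ G.Adj a b

/-- Independence number of the subgraph of `G` induced on `{v | ω v = true}`. -/
def alphaSub {V : Type*} [Fintype V] (G : SimpleGraph V) (ω : V → Bool) : ℕ :=
  sSup {m | ∃ S : Finset V, (∀ v ∈ S, ω v = true) ∧ IsIndep G S ∧ S.card = m}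

/-- The size of a largest intersecting subfamily of the random hypergraph
determined by `ω`. -/
def maxIntersecting (n k : ℕ) (ω : KVert n k → Bool) : ℕ :=
  sSup {m | ∃ F : Finset (KVert n k), (∀ A ∈ F, ω A = true) ∧
    (∀ A ∈ F, ∀ B ∈ F, (A.1 ∩ B.1).Nonempty) ∧ F.card = m}

/-- `(λ,γ)`-supersaturation. -/
def Supersaturated {V : Type*} [Fintype V] (G : SimpleGraph V) (lam gam : ℝ) : Prop :=
  ∀ S : Finset V, lam * Fintype.card V ≤ S.card →
    gam * ((S.card : ℝ) / Fintype.card V) ^ 2 * eTotal G ≤ eCount G S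

/-- `(λ,B)`-stability with respect to `(ε,δ)`. -/
def StableWrt {V : Type*} [Fintype V] [DecidableEq V] (G : SimpleGraph V) (lam : ℝ)
    (B : Set (Finset V)) (eps del : ℝ) : Prop :=
  ∀ S : Finset V, (1 - del) * lam * Fintype.card V ≤ S.card →
    (del * ((S.card : ℝ) / Fintype.card V) ^ 2 * eTotal G ≤ eCount G S) ∨
    ∃ b ∈ B, ((S \ b).card : ℝ) ≤ eps * lam * Fintype.card V

end

/-!
The Kleitman–Winston algorithm. Supersaturation provides, in every large vertex set `A`, a vertex
`v` adjacent to a proportion at least `γD/N` of `A`. Branch on whether `v` lies in the independent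
set `I`: if not, delete `v` from `A`; if so, record `v` in the fingerprint and delete its whole
closed neighbourhood, which shrinks `A` by a factor `1 - γD/N`. A branch stops once `ℓ` vertices are
recorded or `A` has at most `λN` elements; in the latter case any further vertices of `I` complete
the fingerprint. The fingerprint alone determines the branch followed, hence also the final set `A`,
which contains the rest of `I`.
-/

theorem IsIndep.mono {V : Type*} {G : SimpleGraph V} {I J : Finset V} (hJ : IsIndep G J)
    (hIJ : I ⊆ J) : IsIndep G I :=
  fun a ha b hb ↦ hJ a (hIJ ha) b (hIJ hb)

section FingerprintMap

variable {V : Type*} [DecidableEq V] {G : SimpleGraph V}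

/-- `P` maps fingerprints to containers for the independent sets `I ⊆ A` of `G` with at least `k`
elements: each has a `k`-element fingerprint `L ⊆ I` whose container `P L` covers the rest of `I`.
`P` is total on finsets, and `P L ⊆ A \ L` is required of every `L`, not only of fingerprints. -/
structure IsFingerprintMap (G : SimpleGraph V) (k : ℕ) (A : Finset V)
    (P : Finset V → Finset V) : Prop where
  subset_sdiff : ∀ L, P L ⊆ A \ L
  exists_fingerprint : ∀ I ⊆ A, IsIndep G I → k ≤ #I → ∃ L ⊆ I, #L = k ∧ I \ L ⊆ P L

namespace IsFingerprintMap

theorem sdiff (G : SimpleGraph V) (k : ℕ) (A : Finset V) : IsFingerprintMap G k A (A \ ·) where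
  subset_sdiff _ := Subset.rfl
  exists_fingerprint _ hIA _ hk :=
    let ⟨L, hLI, hL⟩ := exists_subset_card_eq hk
    ⟨L, hLI, hL, sdiff_subset_sdiff hIA Subset.rfl⟩

theorem disjoint {k : ℕ} {A : Finset V} {P : Finset V → Finset V} (hP : IsFingerprintMap G k A P)
    (L : Finset V) : Disjoint L (P L) :=
  disjoint_sdiff.mono_right (hP.subset_sdiff L)

variable [DecidableRel G.Adj]

theorem branch {k : ℕ} {A : Finset V} {v : V} {Pout Pin : Finset V → Finset V}
    (hout : IsFingerprintMap G (k + 1) (A.erase v) Pout)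
    (hin : IsFingerprintMap G k {w ∈ A.erase v | ¬G.Adj v w} Pin) :
    IsFingerprintMap G (k + 1) A (fun L ↦ if v ∈ L then Pin (L.erase v) else Pout L) where
  subset_sdiff L w hw := by
    split_ifs at hw with hv
    · have := hin.subset_sdiff _ hw
      grind
    · have := hout.subset_sdiff _ hw
      grind
  exists_fingerprint I hIA hI hk := by
    by_cases hvI : v ∈ I
    · have hsub : I.erase v ⊆ {w ∈ A.erase v | ¬G.Adj v w} := fun w hw ↦
        mem_filter.2 ⟨erase_subset_erase v hIA hw, hI v hvI w (mem_of_mem_erase hw)⟩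
      have hcard : k ≤ #(I.erase v) := by grind
      obtain ⟨L, hLI, hL, hcover⟩ :=
        hin.exists_fingerprint _ hsub (hI.mono (erase_subset v I)) hcard
      have hvL : v ∉ L := fun h ↦ notMem_erase v I (hLI h)
      refine ⟨insert v L, by grind, by rw [card_insert_of_notMem hvL, hL], ?_⟩
      rwa [if_pos (mem_insert_self v L), erase_insert hvL, sdiff_insert, ← erase_sdiff_comm]
    · obtain ⟨L, hLI, hL, hcover⟩ :=
        hout.exists_fingerprint I (subset_erase.2 ⟨hIA, hvI⟩) hI hk
      exact ⟨L, hLI, hL, by rwa [if_neg fun h ↦ hvI (hLI h)]⟩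

end IsFingerprintMap

variable [DecidableRel G.Adj]

theorem card_erase_filter_not_adj_le {A : Finset V} {v : V} {β : ℝ}
    (hdeg : β * #A ≤ #{w ∈ A | G.Adj v w}) :
    (#{w ∈ A.erase v | ¬G.Adj v w} : ℝ) ≤ (1 - β) * #A := by
  have hmono : (#{w ∈ A.erase v | ¬G.Adj v w} : ℝ) ≤ #{w ∈ A | ¬G.Adj v w} := by
    gcongr
    exact erase_subset v A
  have hsplit : (#{w ∈ A | G.Adj v w} : ℝ) + #{w ∈ A | ¬G.Adj v w} = #A :=
    mod_cast card_filter_add_card_filter_not (G.Adj v)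
  linarith

theorem exists_isFingerprintMap_card_le {β M : ℝ} (k : ℕ) (A : Finset V)
    (hdeg : ∀ B ⊆ A, B.Nonempty → M ≤ #B → ∃ v ∈ B, β * #B ≤ #{w ∈ B | G.Adj v w}) :
    ∃ P, IsFingerprintMap G k A P ∧ ∀ L, (#(P L) : ℝ) ≤ max ((1 - β) ^ k * #A) M := by
  induction A using Finset.strongInduction generalizing k with
  | H A ih =>
    by_cases hsmall : (#A : ℝ) ≤ max ((1 - β) ^ k * #A) M
    · exact ⟨_, .sdiff G k A, fun L ↦ le_trans (mod_cast card_le_card sdiff_subset) hsmall⟩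
    obtain ⟨hpow, hM⟩ := max_lt_iff.1 (not_le.1 hsmall)
    have hA : A.Nonempty := by
      rw [nonempty_iff_ne_empty]
      rintro rfl
      simp at hpow
    obtain _ | k := k
    · simp at hpow
    obtain ⟨v, hvA, hv⟩ := hdeg A Subset.rfl hA hM.le
    have hcard : (#{w ∈ A.erase v | ¬G.Adj v w} : ℝ) ≤ (1 - β) * #A :=
      card_erase_filter_not_adj_le hv
    have hβ : 0 ≤ 1 - β :=
      nonneg_of_mul_nonneg_left (hcard.trans' (Nat.cast_nonneg _)) (mod_cast hA.card_pos)
    have herase := erase_ssubset hvA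
    have hnonadj := (filter_subset (¬G.Adj v ·) (A.erase v)).trans_ssubset herase
    obtain ⟨Pout, hPout, hPout_card⟩ := ih _ herase (k + 1)
      fun B hB ↦ hdeg B (hB.trans herase.subset)
    obtain ⟨Pin, hPin, hPin_card⟩ := ih _ hnonadj k fun B hB ↦ hdeg B (hB.trans hnonadj.subset)
    refine ⟨_, hPout.branch hPin, fun L ↦ ?_⟩
    split_ifs
    · refine (hPin_card _).trans (max_le_max_right M ?_)
      rw [pow_succ, mul_assoc]
      gcongr
    · refine (hPout_card L).trans (max_le_max_right M ?_)
      gcongr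

end FingerprintMap

section Degree

variable {V : Type*} [Fintype V] {G : SimpleGraph V} [DecidableRel G.Adj]

theorem sum_card_filter_adj_eq_two_mul_eCount (A : Finset V) :
    ∑ v ∈ A, #{w ∈ A | G.Adj v w} = 2 * eCount G A := by
  classical
  have hdegree (v : (A : Set V)) : #{w ∈ A | G.Adj v w} = (G.induce (A : Set V)).degree v := by
    rw [← SimpleGraph.card_neighborFinset_eq_degree, ← card_map (.subtype (· ∈ (A : Set V)))]
    congr 1
    ext w
    simp [and_comm]
  rw [eCount, Nat.card_eq_fintype_card, ← SimpleGraph.edgeFinset_card,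
    ← SimpleGraph.sum_degrees_eq_twice_card_edges, ← sum_coe_sort]
  exact sum_congr rfl fun v _ ↦ hdegree v

theorem exists_two_mul_eCount_le_card_mul_card_filter_adj {A : Finset V} (hA : A.Nonempty) :
    ∃ v ∈ A, 2 * eCount G A ≤ #A * #{w ∈ A | G.Adj v w} := by
  refine exists_le_of_sum_le hA ?_
  rw [sum_const, smul_eq_mul, ← mul_sum, sum_card_filter_adj_eq_two_mul_eCount]

theorem Supersaturated.exists_le_card_filter_adj {lam gam : ℝ} (hsat : Supersaturated G lam gam)
    {A : Finset V} (hA : A.Nonempty) (hcard : lam * Fintype.card V ≤ #A) :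
    ∃ v ∈ A, gam * (2 * eTotal G / Fintype.card V) / Fintype.card V * #A ≤
      #{w ∈ A | G.Adj v w} := by
  obtain ⟨v, hvA, hv⟩ := exists_two_mul_eCount_le_card_mul_card_filter_adj (G := G) hA
  have hApos : (0 : ℝ) < #A := mod_cast hA.card_pos
  refine ⟨v, hvA, le_of_mul_le_mul_left ?_ hApos⟩
  calc (#A : ℝ) * (gam * (2 * eTotal G / Fintype.card V) / Fintype.card V * #A)
      = 2 * (gam * ((#A : ℝ) / Fintype.card V) ^ 2 * eTotal G) := by ring
    _ ≤ 2 * eCount G A := by gcongr; exact hsat A hcard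
    _ ≤ #A * #{w ∈ A | G.Adj v w} := mod_cast hv

end Degree

theorem fingerprint_supersaturated_general {V : Type*} [Fintype V] [DecidableEq V]
    {lam gam : ℝ} {G : SimpleGraph V} (hsat : Supersaturated G lam gam)
    {D : ℝ} (hD : D = 2 * (eTotal G : ℝ) / Fintype.card V)
    (ℓ : ℕ) {ν : ℝ} (hν : ν = max ((1 - gam * D / Fintype.card V) ^ ℓ) lam) :
    ∃ P, IsFingerprintMap G ℓ univ P ∧ ∀ L, (#(P L) : ℝ) ≤ ν * Fintype.card V := by
  classical
  rw [hν, hD, max_mul_of_nonneg _ _ (Nat.cast_nonneg _), ← card_univ]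
  exact exists_isFingerprintMap_card_le ℓ univ fun B _ hB hcard ↦
    hsat.exists_le_card_filter_adj hB hcard

/-- fingerprint corollary for supersaturated graphs. -/
theorem fingerprint_supersaturated {V : Type*} [Fintype V] [DecidableEq V]
    (lam gam : ℝ) (hlam : lam ∈ Set.Ioc (0 : ℝ) 1) (hgam : gam ∈ Set.Ioc (0 : ℝ) 1)
    (G : SimpleGraph V) (hsat : Supersaturated G lam gam)
    (D : ℝ) (hD : D = 2 * (eTotal G : ℝ) / Fintype.card V)
    (t ℓ : ℕ) (ht : 1 ≤ t) (hℓ0 : 0 < ℓ) (hℓt : ℓ < t)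
    (ν : ℝ) (hν : ν = max ((1 - gam * D / Fintype.card V) ^ ℓ) lam) :
    ∃ P : Finset V → Finset V,
      (∀ L : Finset V, L.card = ℓ → ((P L).card : ℝ) ≤ ν * Fintype.card V) ∧
      ∀ I : Finset V, IsIndep G I → I.card = t →
        ∃ L : Finset V, L ⊆ I ∧ L.card = ℓ ∧ I \ L ⊆ P L ∧ L ∩ P L = ∅ := by
  obtain ⟨P, hP, hcard⟩ := fingerprint_supersaturated_general hsat hD ℓ hν
  refine ⟨P, fun L _ ↦ hcard L, fun I hI hIt ↦ ?_⟩
  obtain ⟨L, hLI, hL, hcover⟩ := hP.exists_fingerprint I (subset_univ I) hI (hIt ▸ hℓt.le)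
  exact ⟨L, hLI, hL, hcover, disjoint_iff_inter_eq_empty.1 (hP.disjoint L)⟩
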